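/- Let n ≥ 1 and let f : {0,1}^n → {0,1} be a local rule of width n. If f is conservative, then f is 1-balanced: ∑_{(x_1,…,x_n) ∈ {0,1}^n} f(x_1,…,x_n) = 2^{n−1}; that is, exactly half of all 2^n input configurations are mapped to 1. -/

import Mathlib

/-- A local rule `f` of width `n` is `L`-conservative if for every `L`-periodic
bisequence `x : ℤ → Fin 2`, the sum of `f` applied to the `n`-blocks starting at
positions `1,…,L` equals the sum of `x` over positions `1,…,L`. -/
def LCons (n : ℕ) (f : (Fin n → Fin 2) → Fin 2) (L : ℕ) : Prop :=
  ∀ x : ℤ → Fin 2, (∀ i : ℤ, x (i + L) = x i) →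
    (∑ i ∈ Finset.range L, (f (fun k => x ((i : ℤ) + 1 + (k : ℕ)))).val) =
      ∑ i ∈ Finset.range L, (x ((i : ℤ) + 1)).val

theorem half_sum {α : Type} [Fintype α] [DecidableEq α] (a : α) :
    2 * (∑ y : α → Fin 2, (y a).val) = 2 ^ Fintype.card α := by
  have h : ∑ y : α → Fin 2, (y a).val = ∑ y : α → Fin 2, (Fin.rev (y a)).val :=
    (Equiv.sum_comp (Equiv.arrowCongr (Equiv.refl α) (Fin.revPerm (n := 2)))
      (fun y : α → Fin 2 => (y a).val)).symm
  have h2 : ∑ y : α → Fin 2, ((y a).val + (Fin.rev (y a)).val) = 2 ^ Fintype.card α := by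
    rw [Finset.sum_congr rfl (g := fun _ => 1)]
    · simp
    · intro y _
      have := (y a).isLt
      rw [Fin.val_rev]
      omega
  rw [Finset.sum_add_distrib, ← h] at h2
  omega

theorem shift_bij (n : ℕ) [NeZero n] (c : ZMod n) :
    Function.Bijective (fun k : Fin n => c + ((k : ℕ) : ZMod n)) := by
  rw [Fintype.bijective_iff_injective_and_card]
  refine ⟨?_, by simp [ZMod.card]⟩
  intro a b hab
  have h := add_left_cancel hab
  rw [ZMod.natCast_eq_natCast_iff'] at h
  rw [Nat.mod_eq_of_lt a.isLt, Nat.mod_eq_of_lt b.isLt] at h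
  exact Fin.ext h

/-- A conservative rule of width `n ≥ 1` is `1`-balanced: the sum of its values
over all `2^n` input blocks equals `2^(n-1)`. -/
theorem stmt_6 (n : ℕ) (hn : 1 ≤ n) (f : (Fin n → Fin 2) → Fin 2)
    (hf : ∀ L : ℕ, 0 < L → LCons n f L) :
    (∑ x : Fin n → Fin 2, (f x).val) = 2 ^ (n - 1) := by
  haveI : NeZero n := ⟨by omega⟩
  have key : ∀ y : ZMod n → Fin 2, _ := fun y =>
    hf n hn (fun i => y (i : ZMod n)) (fun i => by simp)
  have tot := Finset.sum_congr (rfl : (Finset.univ : Finset (ZMod n → Fin 2)) = Finset.univ)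
    (fun y _ => key y)
  rw [Finset.sum_comm, Finset.sum_comm (s := Finset.univ)] at tot
  have hL : ∀ i : ℕ, ∑ y : ZMod n → Fin 2,
      (f (fun k => y (((i : ℤ) + 1 + (k : ℕ) : ℤ) : ZMod n))).val
        = ∑ x : Fin n → Fin 2, (f x).val := by
    intro i
    rw [← Equiv.sum_comp (Equiv.arrowCongr
      (Equiv.ofBijective _ (shift_bij n ((i : ZMod n) + 1))).symm (Equiv.refl (Fin 2)))
      (fun x : Fin n → Fin 2 => (f x).val)]
    refine Finset.sum_congr rfl fun y _ => ?_
    congr 2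
    funext k
    simp [Equiv.arrowCongr]
  have hR : ∀ i : ℕ, ∑ y : ZMod n → Fin 2, (y (((i : ℤ) + 1 : ℤ) : ZMod n)).val
        = 2 ^ (n - 1) := by
    intro i
    have h := half_sum (((i : ℤ) + 1 : ℤ) : ZMod n)
    rw [ZMod.card] at h
    obtain ⟨m, rfl⟩ : ∃ m, n = m + 1 := ⟨n - 1, by omega⟩
    rw [pow_succ] at h
    simp only [Nat.add_sub_cancel]
    omega
  rw [Finset.sum_congr rfl (fun i _ => hL i), Finset.sum_congr rfl (fun i _ => hR i)] at tot
  simp only [Finset.sum_const, Finset.card_range, smul_eq_mul] at tot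
  exact Nat.eq_of_mul_eq_mul_left hn tot
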